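/- arXiv:math/9801066 — 9 statements merged into one kernel-verified Lean document; each statement's English description precedes it below -/
import Mathlib

section
/- MacMahon's box formula: for natural numbers a, b, c, the number of plane partitions with at most a rows, at most b columns, and no part exceeding c — i.e., the number of functions f : Fin a × Fin b → Fin (c+1) that are antitone with respect to the product order on Fin a × Fin b — satisfies (number of such f) · ∏_{i=0}^{a-1} ∏_{j=0}^{b-1} ∏_{k=0}^{c-1} (i+j+k+1) = ∏_{i=0}^{a-1} ∏_{j=0}^{b-1} ∏_{k=0}^{c-1} (i+j+k+2). -/
/-!
Complementing the parts turns a plane partition in an `a × b × c` box into a monotone array, which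
is exactly the upper right block of a monotone triangular array of size `a + b` whose diagonal is
`0` (`a` times) followed by `c` (`b` times): monotonicity forces the two other blocks to be `0` and
`c`. Such arrays are Gelfand–Tsetlin patterns. Peeling off the diagonal and expanding determinants
row by row shows that the patterns with diagonal `l` are counted by `det ((l i + i).choose j)`,
a quotient of two Vandermonde determinants (Weyl's dimension formula for `GLₙ`). For the
diagonal above, all factors of the quotient cancel except those pairing an index of the first block
with an index of the second one.
-/

open Finset Matrix

theorem castAdd_lt_natAdd {m n : ℕ} (i : Fin m) (j : Fin n) : i.castAdd n < j.natAdd m :=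
  Fin.lt_def.2 (i.isLt.trans_le (Nat.le_add_right m j))

theorem monotone_append {α : Type*} [Preorder α] {m n : ℕ} {v : Fin m → α} {w : Fin n → α}
    (hv : Monotone v) (hw : Monotone w) (hvw : ∀ i j, v i ≤ w j) : Monotone (Fin.append v w) := by
  intro i j hij
  induction i using Fin.addCases with
  | left i =>
    induction j using Fin.addCases with
    | left j => simpa using hv hij
    | right j => simpa using hvw i j
  | right i =>
    induction j using Fin.addCases with
    | left j => exact absurd hij (castAdd_lt_natAdd j i).not_ge
    | right j => simpa using hw ((Fin.natAdd_le_natAdd_iff m).1 hij)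

section Determinants

variable {R : Type*} [CommRing R]

theorem det_sum_rows {ι κ : Type*} [DecidableEq ι] [Fintype ι] (s : ι → Finset κ)
    (f : ι → κ → ι → R) :
    (of fun i j => ∑ k ∈ s i, f i k j).det =
      ∑ m ∈ Fintype.piFinset s, (of fun i j => f i (m i) j).det := by
  have expand := (detRowAlternating (n := ι) (R := R)).toMultilinearMap.map_sum_finset f s
  have rows : (of fun i j => ∑ k ∈ s i, f i k j) = fun i => ∑ k ∈ s i, f i k := by
    ext i j
    simp only [of_apply, Finset.sum_apply]
  rw [rows]
  exact expand

theorem det_eq_det_row_sub_row_of_column_zero_eq_one {n : ℕ}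
    (A : Matrix (Fin (n + 1)) (Fin (n + 1)) R) (hA : ∀ i, A i 0 = 1) :
    A.det = (of fun i j : Fin n => A i.succ j.succ - A i.castSucc j.succ).det := by
  let B : Matrix (Fin (n + 1)) (Fin (n + 1)) R :=
    of (Fin.cons (A 0) fun i => A i.succ - A i.castSucc)
  have hAB : A.det = B.det :=
    det_eq_of_forall_row_eq_smul_add_pred (fun _ => 1) (by simp [B]) (by simp [B])
  rw [hAB, det_succ_column_zero, Fin.sum_univ_succ]
  simp [B, hA, submatrix]

theorem prod_factorial_mul_det_choose {n : ℕ} (v : Fin n → ℕ) :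
    (∏ i : Fin n, ((i : ℕ).factorial : ℤ)) * (of fun i j : Fin n => ((v i).choose j : ℤ)).det =
      (vandermonde fun i => (v i : ℤ)).det := by
  rw [det_eval_matrixOfPolynomials_eq_det_vandermonde _ (fun i : Fin n => descPochhammer ℤ i)
    (fun i => descPochhammer_natDegree ℤ i) (fun i => monic_descPochhammer ℤ i), ← det_mul_row]
  simp [descPochhammer_eval_eq_descFactorial, Nat.descFactorial_eq_factorial_mul_choose]

theorem det_choose_val (n : ℕ) : (of fun i j : Fin n => ((i : ℕ).choose j : ℤ)).det = 1 := by
  rw [det_of_isLowerTriangular _ fun i j hij => ?_]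
  · simp
  · simp [Nat.choose_eq_zero_of_lt (show (i : ℕ) < j from hij)]

theorem det_choose_mul_det_vandermonde_val {n : ℕ} (v : Fin n → ℕ) :
    (of fun i j : Fin n => ((v i).choose j : ℤ)).det * (vandermonde fun i : Fin n => (i : ℤ)).det =
      (vandermonde fun i => (v i : ℤ)).det := by
  rw [← prod_factorial_mul_det_choose v, ← prod_factorial_mul_det_choose fun i : Fin n => (i : ℕ),
    det_choose_val, mul_one, mul_comm]

theorem prod_Ioi_castAdd {M : Type*} [CommMonoid M] {m n : ℕ} (f : Fin (m + n) → M) (i : Fin m) :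
    ∏ j ∈ Ioi (i.castAdd n), f j =
      (∏ j ∈ Ioi i, f (j.castAdd n)) * ∏ j : Fin n, f (j.natAdd m) := by
  simp only [← filter_lt_eq_Ioi, prod_filter, Fin.prod_univ_add]
  simp [castAdd_lt_natAdd, (Fin.strictMono_castAdd n).lt_iff_lt]

theorem prod_Ioi_natAdd {M : Type*} [CommMonoid M] {m n : ℕ} (f : Fin (m + n) → M) (i : Fin n) :
    ∏ j ∈ Ioi (i.natAdd m), f j = ∏ j ∈ Ioi i, f (j.natAdd m) := by
  rw [← Fin.map_natAddEmb_Ioi, prod_map]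
  rfl

theorem det_vandermonde_append {m n : ℕ} (v : Fin m → R) (w : Fin n → R) :
    (vandermonde (Fin.append v w)).det =
      (vandermonde v).det * (vandermonde w).det * ∏ i, ∏ j, (w j - v i) := by
  simp only [det_vandermonde, Fin.prod_univ_add, prod_Ioi_castAdd, prod_Ioi_natAdd,
    Fin.append_left, Fin.append_right, prod_mul_distrib]
  exact mul_right_comm _ _ _

theorem det_vandermonde_append_val_add (a b c : ℕ) :
    (vandermonde (Fin.append (fun i : Fin a => (i : ℤ)) fun j : Fin b => (j : ℤ) + (a + c))).det =
      (vandermonde fun i : Fin a => (i : ℤ)).det * (vandermonde fun j : Fin b => (j : ℤ)).det *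
        ((∏ i ∈ range a, ∏ j ∈ range b, (i + j + c + 1) : ℕ) : ℤ) := by
  rw [det_vandermonde_append, det_vandermonde_add, ← prod_range_reflect]
  simp only [prod_range, Nat.cast_prod]
  congr! 3 with i _ j _
  have hi := i.isLt
  push_cast [Nat.sub_sub, Nat.cast_sub (show 1 + (i : ℕ) ≤ a by omega)]
  ring

end Determinants

theorem sum_Icc_add_choose {x y : ℕ} (hxy : x ≤ y) (i j : ℕ) :
    ∑ m ∈ Icc x y, ((m + i).choose j : ℤ) =
      (y + (i + 1)).choose (j + 1) - (x + i).choose (j + 1) := by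
  induction y, hxy using Nat.le_induction with
  | base => simp [← add_assoc, Nat.choose_succ_succ]
  | succ y hxy ih =>
    rw [← insert_Icc_right_eq_Icc_add_one (by omega), sum_insert (by simp), ih]
    rw [add_right_comm y 1 (i + 1), Nat.choose_succ_succ']
    push_cast
    ring_nf

theorem prod_range_add_two_mul (m c : ℕ) :
    (∏ k ∈ range c, (m + k + 2)) * (m + 1) = (∏ k ∈ range c, (m + k + 1)) * (m + c + 1) := by
  rw [← prod_range_succ fun k => m + k + 1, prod_range_succ']
  rfl

/-- Index set of the triangular arrays of size `n`: the positions on or above the diagonal of an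
`n × n` matrix, ordered componentwise. -/
abbrev UpperTriangle (n : ℕ) : Type := {x : Fin n × Fin n // x.1 ≤ x.2}

namespace UpperTriangle

variable {n : ℕ}

/-- The `i`-th position on the diagonal. -/
def onDiag (i : Fin n) : UpperTriangle n := ⟨(i, i), le_rfl⟩

/-- The positions strictly above the diagonal form a triangle of size one less. -/
def aboveDiag (x : UpperTriangle n) : UpperTriangle (n + 1) :=
  ⟨(x.1.1.castSucc, x.1.2.succ), (Fin.castSucc_lt_succ_iff.2 x.2).le⟩

theorem bijective_sumElim_onDiag_aboveDiag :
    Function.Bijective (Sum.elim onDiag aboveDiag : Fin (n + 1) ⊕ UpperTriangle n → _) := by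
  have diag_ne_aboveDiag (i : Fin (n + 1)) (x : UpperTriangle n) : onDiag i ≠ aboveDiag x := by
    intro h
    have hx : x.1.1.castSucc = x.1.2.succ :=
      (congrArg (·.1.1) h).symm.trans (congrArg (·.1.2) h)
    exact (Fin.castSucc_lt_succ_iff.2 x.2).ne hx
  refine ⟨Function.Injective.sumElim ?_ ?_ diag_ne_aboveDiag, ?_⟩
  · exact fun i j h => congrArg (·.1.1) h
  · intro x y h
    exact Subtype.ext (Prod.ext (Fin.castSucc_injective n (congrArg (·.1.1) h))
      (Fin.succ_injective n (congrArg (·.1.2) h)))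
  · rintro ⟨⟨i, j⟩, hij⟩
    obtain (rfl : i = j) | (hij : i < j) := hij.eq_or_lt
    · exact ⟨.inl i, rfl⟩
    · obtain ⟨i, rfl⟩ := Fin.exists_castSucc_eq.2 (Fin.ne_last_of_lt hij)
      obtain ⟨j, rfl⟩ := Fin.exists_succ_eq.2 (Fin.ne_zero_of_lt hij)
      exact ⟨.inr ⟨(i, j), Fin.castSucc_lt_succ_iff.1 hij⟩, rfl⟩

/-- The array with the given values on the diagonal and above it. -/
noncomputable def glue {α : Type*} (l : Fin (n + 1) → α) (Y : UpperTriangle n → α) :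
    UpperTriangle (n + 1) → α :=
  Sum.elim l Y ∘ (Equiv.ofBijective _ bijective_sumElim_onDiag_aboveDiag).symm

@[simp]
theorem glue_onDiag {α : Type*} (l : Fin (n + 1) → α) (Y : UpperTriangle n → α) (i : Fin (n + 1)) :
    glue l Y (onDiag i) = l i :=
  congrArg (Sum.elim l Y)
    ((Equiv.ofBijective _ bijective_sumElim_onDiag_aboveDiag).symm_apply_apply (.inl i))

@[simp]
theorem glue_aboveDiag {α : Type*} (l : Fin (n + 1) → α) (Y : UpperTriangle n → α)
    (x : UpperTriangle n) : glue l Y (aboveDiag x) = Y x :=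
  congrArg (Sum.elim l Y)
    ((Equiv.ofBijective _ bijective_sumElim_onDiag_aboveDiag).symm_apply_apply (.inr x))

theorem glue_comp_onDiag {α : Type*} (l : Fin (n + 1) → α) (Y : UpperTriangle n → α) :
    glue l Y ∘ onDiag = l :=
  funext (glue_onDiag l Y)

theorem glue_comp_aboveDiag {α : Type*} (l : Fin (n + 1) → α) (Y : UpperTriangle n → α) :
    glue l Y ∘ aboveDiag = Y :=
  funext (glue_aboveDiag l Y)

theorem glue_comp_onDiag_comp_aboveDiag {α : Type*} (X : UpperTriangle (n + 1) → α) :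
    glue (X ∘ onDiag) (X ∘ aboveDiag) = X := by
  funext x
  obtain ⟨i | x, rfl⟩ := bijective_sumElim_onDiag_aboveDiag.surjective x <;> simp

theorem monotone_iff_aboveDiag {α : Type*} [Preorder α] {X : UpperTriangle (n + 1) → α} :
    Monotone X ↔ Monotone (X ∘ aboveDiag) ∧ ∀ i : Fin n,
      X (onDiag i.castSucc) ≤ X (aboveDiag (onDiag i)) ∧
        X (aboveDiag (onDiag i)) ≤ X (onDiag i.succ) := by
  constructor
  · refine fun hX => ⟨hX.comp fun x y hxy => ?_, fun i => ⟨hX ?_, hX ?_⟩⟩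
    · exact ⟨Fin.castSucc_le_castSucc_iff.2 hxy.1, Fin.succ_le_succ_iff.2 hxy.2⟩
    · exact ⟨le_rfl, Fin.castSucc_lt_succ.le⟩
    · exact ⟨Fin.castSucc_lt_succ.le, le_rfl⟩
  · rintro ⟨h_above, h_interlace⟩
    have h_diag : Monotone (X ∘ onDiag) :=
      Fin.monotone_iff_le_succ.2 fun i => (h_interlace i).1.trans (h_interlace i).2
    intro x y hxy
    obtain ⟨i | x, rfl⟩ := bijective_sumElim_onDiag_aboveDiag.surjective x <;>
      obtain ⟨j | y, rfl⟩ := bijective_sumElim_onDiag_aboveDiag.surjective y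
    · exact h_diag hxy.1
    · calc X (onDiag i) ≤ X (onDiag y.1.1.castSucc) := h_diag hxy.1
        _ ≤ X (aboveDiag (onDiag y.1.1)) := (h_interlace _).1
        _ ≤ X (aboveDiag y) := h_above ⟨le_rfl, y.2⟩
    · calc X (aboveDiag x) ≤ X (aboveDiag (onDiag x.1.2)) := h_above ⟨x.2, le_rfl⟩
        _ ≤ X (onDiag x.1.2.succ) := (h_interlace _).2
        _ ≤ X (onDiag j) := h_diag hxy.2
    · exact h_above ⟨Fin.castSucc_le_castSucc_iff.1 hxy.1, Fin.succ_le_succ_iff.1 hxy.2⟩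

section Block

variable {a b : ℕ} {α : Type*} {u v : α}

/-- The embedding of an `a × b` rectangle as the upper right block of a triangle of size `a + b`. -/
def block (x : Fin a × Fin b) : UpperTriangle (a + b) :=
  ⟨(x.1.castAdd b, x.2.natAdd a), (castAdd_lt_natAdd x.1 x.2).le⟩

theorem monotone_block : Monotone (block : Fin a × Fin b → UpperTriangle (a + b)) :=
  fun _ _ h => ⟨(Fin.strictMono_castAdd b).monotone h.1, (Fin.strictMono_natAdd a).monotone h.2⟩

/-- The triangular array with upper right block `f`, which is constant with value `u` on the
triangle to the left of this block and with value `v` on the triangle below it. -/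
def extendBlock (u v : α) (f : Fin a × Fin b → α) (x : UpperTriangle (a + b)) : α :=
  Fin.append (fun i => Fin.append (fun _ => u) fun j => f (i, j)) (fun _ _ => v) x.1.1 x.1.2

@[simp]
theorem extendBlock_block (f : Fin a × Fin b → α) (x : Fin a × Fin b) :
    extendBlock u v f (block x) = f x := by
  simp [extendBlock, block]

theorem extendBlock_comp_onDiag (f : Fin a × Fin b → α) :
    extendBlock u v f ∘ onDiag = Fin.append (fun _ => u) fun _ => v := by
  funext i
  induction i using Fin.addCases <;> simp [extendBlock, onDiag]

variable [Preorder α]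

theorem extendBlock_le {f : Fin a × Fin b → α} (huv : u ≤ v) (hfv : ∀ x, f x ≤ v)
    (x : UpperTriangle (a + b)) : extendBlock u v f x ≤ v := by
  obtain ⟨⟨i, j⟩, hij⟩ := x
  induction i using Fin.addCases <;> induction j using Fin.addCases <;>
    simp [extendBlock, huv, hfv]

theorem le_extendBlock {f : Fin a × Fin b → α} (huv : u ≤ v) (huf : ∀ x, u ≤ f x)
    (x : UpperTriangle (a + b)) : u ≤ extendBlock u v f x := by
  obtain ⟨⟨i, j⟩, hij⟩ := x
  induction i using Fin.addCases <;> induction j using Fin.addCases <;>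
    simp [extendBlock, huv, huf]

theorem monotone_extendBlock {f : Fin a × Fin b → α} (hf : Monotone f) (huv : u ≤ v)
    (huf : ∀ x, u ≤ f x) (hfv : ∀ x, f x ≤ v) : Monotone (extendBlock u v f) := by
  rintro ⟨⟨i, j⟩, hij⟩ ⟨⟨i', j'⟩, hij'⟩ ⟨hi, hj⟩
  dsimp only at hi hj
  induction i' using Fin.addCases with
  | right i' => simpa [extendBlock] using extendBlock_le huv hfv ⟨(i, j), hij⟩
  | left i' =>
    induction i using Fin.addCases with
    | right i => exact absurd hi (castAdd_lt_natAdd i' i).not_ge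
    | left i =>
      induction j using Fin.addCases with
      | left j => simpa [extendBlock] using le_extendBlock huv huf ⟨(i'.castAdd b, j'), hij'⟩
      | right j =>
        induction j' using Fin.addCases with
        | left j' => exact absurd hj (castAdd_lt_natAdd j' j).not_ge
        | right j' =>
          have hff : f (i, j) ≤ f (i', j') := hf ⟨hi, (Fin.natAdd_le_natAdd_iff a).1 hj⟩
          simpa [extendBlock]

end Block

end UpperTriangle

open UpperTriangle

/-- Gelfand–Tsetlin patterns whose top row, listed in increasing order, is `l`: monotone triangular
arrays of natural numbers. The top row of the usual picture is the diagonal of the array, and the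
lower rows are the parallels to the diagonal. -/
abbrev GelfandTsetlinPattern {n : ℕ} (l : Fin n → ℕ) : Type :=
  {X : UpperTriangle n → ℕ // Monotone X ∧ X ∘ onDiag = l}

namespace GelfandTsetlinPattern

variable {n : ℕ} {l : Fin n → ℕ}

theorem apply_onDiag (X : GelfandTsetlinPattern l) (i : Fin n) : X.1 (onDiag i) = l i :=
  congrFun X.2.2 i

theorem le_apply (X : GelfandTsetlinPattern l) (x : UpperTriangle n) : l x.1.1 ≤ X.1 x :=
  X.apply_onDiag x.1.1 ▸ X.2.1 ⟨le_rfl, x.2⟩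

theorem apply_le (X : GelfandTsetlinPattern l) (x : UpperTriangle n) : X.1 x ≤ l x.1.2 :=
  X.apply_onDiag x.1.2 ▸ X.2.1 ⟨x.2, le_rfl⟩

instance : Finite (GelfandTsetlinPattern l) :=
  ((Set.finite_Iic fun x : UpperTriangle n => l x.1.2).subset
    fun X hX => apply_le ⟨X, hX⟩).to_subtype

/-- Removing the diagonal leaves a pattern whose own diagonal interlaces with the removed one. -/
noncomputable def succEquiv (l : Fin (n + 1) → ℕ) :
    GelfandTsetlinPattern l ≃
      Σ m : Fintype.piFinset fun i : Fin n => Icc (l i.castSucc) (l i.succ),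
        GelfandTsetlinPattern m.1 where
  toFun X := ⟨⟨X.1 ∘ aboveDiag ∘ onDiag, by
      obtain ⟨X, hX, rfl⟩ := X
      simpa using (monotone_iff_aboveDiag.1 hX).2⟩,
    X.1 ∘ aboveDiag, (monotone_iff_aboveDiag.1 X.2.1).1, rfl⟩
  invFun Y := ⟨glue l Y.2.1, by
      rw [monotone_iff_aboveDiag, glue_comp_aboveDiag]
      refine ⟨Y.2.2.1, fun i => ?_⟩
      simpa [apply_onDiag] using Fintype.mem_piFinset.1 Y.1.2 i,
    glue_comp_onDiag l Y.2.1⟩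
  left_inv X := by
    obtain ⟨X, hX, rfl⟩ := X
    exact Subtype.ext (glue_comp_onDiag_comp_aboveDiag X)
  right_inv Y := by
    refine Sigma.subtype_ext (Subtype.ext ?_) (glue_comp_aboveDiag l Y.2.1)
    exact (congrArg (· ∘ onDiag) (glue_comp_aboveDiag l Y.2.1)).trans Y.2.2.2

theorem card_succ (l : Fin (n + 1) → ℕ) :
    Nat.card (GelfandTsetlinPattern l) =
      ∑ m ∈ Fintype.piFinset fun i : Fin n => Icc (l i.castSucc) (l i.succ),
        Nat.card (GelfandTsetlinPattern m) := by
  rw [Nat.card_congr (succEquiv l), Nat.card_sigma]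
  exact sum_coe_sort _ fun m => Nat.card (GelfandTsetlinPattern m)

theorem card_eq_det (hl : Monotone l) :
    (Nat.card (GelfandTsetlinPattern l) : ℤ) =
      (of fun i j : Fin n => ((l i + i).choose j : ℤ)).det := by
  induction n with
  | zero =>
    have : Unique (GelfandTsetlinPattern l) :=
      ⟨⟨isEmptyElim, fun x => isEmptyElim x, Subsingleton.elim _ _⟩, fun _ => Subsingleton.elim _ _⟩
    simp
  | succ n ih =>
    have monotone_of_mem {m : Fin n → ℕ}
        (hm : m ∈ Fintype.piFinset fun i : Fin n => Icc (l i.castSucc) (l i.succ)) :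
        Monotone m := by
      simp only [Fintype.mem_piFinset, mem_Icc] at hm
      refine monotone_iff_forall_lt.2 fun i j hij => ?_
      calc m i ≤ l i.succ := (hm i).2
        _ ≤ l j.castSucc := hl (Fin.succ_le_castSucc_iff.2 hij)
        _ ≤ m j := (hm j).1
    rw [card_succ, Nat.cast_sum, sum_congr rfl fun m hm => ih (monotone_of_mem hm),
      ← det_sum_rows (fun i : Fin n => Icc (l i.castSucc) (l i.succ))
        fun i k j => ((k + i).choose j : ℤ),
      det_eq_det_row_sub_row_of_column_zero_eq_one _ (by simp)]
    simp [sum_Icc_add_choose (hl Fin.castSucc_lt_succ.le)]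

theorem card_mul_det_vandermonde_val (hl : Monotone l) :
    Nat.card (GelfandTsetlinPattern l) * (vandermonde fun i : Fin n => (i : ℤ)).det =
      (vandermonde fun i : Fin n => ((l i + i : ℕ) : ℤ)).det := by
  rw [card_eq_det hl, det_choose_mul_det_vandermonde_val]

variable {a b c : ℕ}

theorem eq_extendBlock
    (X : GelfandTsetlinPattern (Fin.append (fun _ : Fin a => 0) fun _ : Fin b => c)) :
    X.1 = extendBlock 0 c (X.1 ∘ block) := by
  funext ⟨⟨i, j⟩, hij⟩
  have lower := X.le_apply ⟨(i, j), hij⟩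
  have upper := X.apply_le ⟨(i, j), hij⟩
  induction i using Fin.addCases with
  | left i =>
    induction j using Fin.addCases with
    | left j => simpa [extendBlock] using upper
    | right j => simp [extendBlock, block]
  | right i =>
    induction j using Fin.addCases with
    | left j => exact absurd hij (castAdd_lt_natAdd j i).not_ge
    | right j => simpa [extendBlock] using upper.antisymm (by simpa using lower)

/-- A bounded monotone rectangular array is the upper right block of a unique pattern whose top row
consists of `a` zeros and `b` copies of the bound. -/
def boxEquiv (a b c : ℕ) :
    {f : Fin a × Fin b → Fin (c + 1) // Monotone f} ≃
      GelfandTsetlinPattern (Fin.append (fun _ : Fin a => 0) fun _ : Fin b => c) where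
  toFun f := ⟨extendBlock 0 c fun x => (f.1 x : ℕ),
    monotone_extendBlock f.2 c.zero_le (fun _ => Nat.zero_le _) fun x => (f.1 x).is_le,
    extendBlock_comp_onDiag _⟩
  invFun X := ⟨fun x => ⟨X.1 (block x), by
      simpa [block] using Nat.lt_succ_of_le (X.apply_le (block x))⟩,
    fun _ _ hxy => X.2.1 (monotone_block hxy)⟩
  left_inv f := by
    ext x
    simp
  right_inv X := Subtype.ext X.eq_extendBlock.symm

theorem append_zero_const_add_val (a b d : ℕ) :
    (fun i : Fin (a + b) =>
        ((Fin.append (fun _ : Fin a => 0) (fun _ : Fin b => d) i + i : ℕ) : ℤ)) =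
      Fin.append (fun i : Fin a => (i : ℤ)) fun j : Fin b => (j : ℤ) + (a + d) := by
  funext i
  induction i using Fin.addCases with
  | left i => simp
  | right j =>
    simp only [Fin.append_right, Fin.val_natAdd]
    push_cast
    ring

theorem val_eq_append (a b : ℕ) :
    (fun i : Fin (a + b) => (i : ℤ)) =
      Fin.append (fun i : Fin a => (i : ℤ)) fun j : Fin b => (j : ℤ) + (a + (0 : ℕ)) := by
  funext i
  induction i using Fin.addCases with
  | left i => simp
  | right j =>
    simp only [Fin.append_right, Fin.val_natAdd]
    push_cast
    ring

theorem card_append_zero_const_mul_prod (a b c : ℕ) :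
    Nat.card (GelfandTsetlinPattern (Fin.append (fun _ : Fin a => 0) fun _ : Fin b => c)) *
        ∏ i ∈ range a, ∏ j ∈ range b, (i + j + 1) =
      ∏ i ∈ range a, ∏ j ∈ range b, (i + j + c + 1) := by
  have monotone_diag : Monotone (Fin.append (fun _ : Fin a => 0) fun _ : Fin b => c) :=
    monotone_append monotone_const monotone_const fun _ _ => c.zero_le
  have weyl := card_mul_det_vandermonde_val monotone_diag
  rw [append_zero_const_add_val, val_eq_append, det_vandermonde_append_val_add,
    det_vandermonde_append_val_add, mul_left_comm] at weyl
  have det_ne_zero (n : ℕ) : (vandermonde fun i : Fin n => (i : ℤ)).det ≠ 0 :=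
    det_vandermonde_ne_zero_iff.2 (Nat.cast_injective.comp Fin.val_injective)
  exact Nat.cast_injective (R := ℤ) <|
    mul_left_cancel₀ (mul_ne_zero (det_ne_zero a) (det_ne_zero b)) (by simpa using weyl)

end GelfandTsetlinPattern

theorem card_antitone_eq_card_monotone {α β : Type*} [Preorder α] [Preorder β] (e : β ≃o βᵒᵈ) :
    Nat.card {f : α → β // Antitone f} = Nat.card {f : α → β // Monotone f} := by
  refine Nat.card_congr
    (((Equiv.refl α).arrowCongr (e.toEquiv.trans OrderDual.ofDual)).subtypeEquiv fun f => ?_)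
  exact ⟨fun hf i j hij => e.monotone (hf hij), fun hf i j hij => e.le_iff_le.1 (hf hij)⟩

/-- MacMahon's box formula, stated multiplicatively: the number of plane
partitions with at most `a` rows, at most `b` columns, and no part exceeding
`c` (encoded as antitone functions `Fin a × Fin b → Fin (c+1)` for the
componentwise order) times `∏∏∏ (i+j+k+1)` equals `∏∏∏ (i+j+k+2)`. -/
theorem macmahon_box_formula (a b c : ℕ) :
    Nat.card {f : Fin a × Fin b → Fin (c + 1) // Antitone f} *
      (∏ i ∈ Finset.range a, ∏ j ∈ Finset.range b, ∏ k ∈ Finset.range c,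
        (i + j + k + 1)) =
    ∏ i ∈ Finset.range a, ∏ j ∈ Finset.range b, ∏ k ∈ Finset.range c,
      (i + j + k + 2) := by
  have telescope :
      (∏ i ∈ range a, ∏ j ∈ range b, ∏ k ∈ range c, (i + j + k + 2)) *
          ∏ i ∈ range a, ∏ j ∈ range b, (i + j + 1) =
        (∏ i ∈ range a, ∏ j ∈ range b, ∏ k ∈ range c, (i + j + k + 1)) *
          ∏ i ∈ range a, ∏ j ∈ range b, (i + j + c + 1) := by
    simp only [← prod_mul_distrib, prod_range_add_two_mul]
  have denominator_pos : 0 < ∏ i ∈ range a, ∏ j ∈ range b, (i + j + 1) := by positivity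
  refine Nat.eq_of_mul_eq_mul_right denominator_pos ?_
  rw [telescope, card_antitone_eq_card_monotone Fin.revOrderIso.symm,
    Nat.card_congr (GelfandTsetlinPattern.boxEquiv a b c),
    ← GelfandTsetlinPattern.card_append_zero_const_mul_prod]
  ring
end

section
/- For natural numbers a and b, the specialization of MacMahon's product formula at c = 1 is the binomial coefficient: ∏_{i=0}^{a-1} ∏_{j=0}^{b-1} (i+j+2) = (a+b choose a) · ∏_{i=0}^{a-1} ∏_{j=0}^{b-1} (i+j+1). -/
/-!
Let `R i = ∏_{j<b} (i+j+1)` be the product over the `i`-th row on the right. The corresponding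
row on the left is `R (i+1)`, so the quotient of the two double products telescopes to
`R a / R 0`, and `R i = b! · (i+b choose i)` turns this into `(a+b choose a)`.
-/

open scoped Nat

theorem prod_range_succ_mul_zero {M : Type*} [CommMonoid M] (f : ℕ → M) (n : ℕ) :
    (∏ i ∈ Finset.range n, f (i + 1)) * f 0 = (∏ i ∈ Finset.range n, f i) * f n :=
  (Finset.prod_range_succ' f n).symm.trans (Finset.prod_range_succ f n)

theorem prod_range_add_add_one_eq_factorial_mul_choose (n k : ℕ) :
    ∏ j ∈ Finset.range k, (n + j + 1) = k ! * (n + k).choose n := by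
  rw [Nat.choose_symm_add, ← Nat.ascFactorial_eq_factorial_mul_choose,
    Nat.ascFactorial_eq_prod_range]
  simp only [add_right_comm]

/-- The specialization of MacMahon's product formula at `c = 1`, stated
multiplicatively: `∏_{i<a} ∏_{j<b} (i+j+2) = (a+b choose a) · ∏_{i<a} ∏_{j<b} (i+j+1)`. -/
theorem macmahon_c_eq_one (a b : ℕ) :
    ∏ i ∈ Finset.range a, ∏ j ∈ Finset.range b, (i + j + 2) =
      (a + b).choose a * ∏ i ∈ Finset.range a, ∏ j ∈ Finset.range b, (i + j + 1) := by
  let R (i : ℕ) : ℕ := ∏ j ∈ Finset.range b, (i + j + 1)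
  have row_shift (i : ℕ) : ∏ j ∈ Finset.range b, (i + j + 2) = R (i + 1) :=
    Finset.prod_congr rfl fun j _ => by ring
  have row_eq (i : ℕ) : R i = b ! * (i + b).choose i :=
    prod_range_add_add_one_eq_factorial_mul_choose i b
  have row_zero : R 0 = b ! := by simp [row_eq]
  simp only [row_shift]
  refine Nat.eq_of_mul_eq_mul_right b.factorial_pos ?_
  calc (∏ i ∈ Finset.range a, R (i + 1)) * b !
      = (∏ i ∈ Finset.range a, R i) * R a := by
        rw [← row_zero, prod_range_succ_mul_zero]
    _ = (a + b).choose a * (∏ i ∈ Finset.range a, R i) * b ! := by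
        rw [row_eq a]; ring
end

section
/- Let P be a finite partially ordered set. For any two lower sets s and t of P there exist n and a sequence of lower sets s = c_0, c_1, …, c_n = t such that for each m < n the symmetric difference of c_m and c_{m+1} is a singleton (consists of exactly one element of P). In other words, the graph on the lower sets of P in which two lower sets are adjacent iff their symmetric difference has exactly one element is connected. -/
/-!
Removing from a lower set `s` a maximal element of `s \ t`, where `t` is a lower set below `s`,
leaves a lower set that still contains `t`: anything of `s` above such an element also avoids `t`.
Hence `s` descends to `t` one element at a time whenever `s \ t` is finite. Two arbitrary lower sets
with finite symmetric difference both descend in this way to their intersection.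
-/

/-- The graph of the lower sets of `P`, with an edge between two lower sets that differ in exactly
one element. It lives on the bundled type `LowerSet P`, so that walks in it consist of lower
sets. -/
def lowerSetGraph (P : Type*) [LE P] : SimpleGraph (LowerSet P) where
  Adj s t := ∃ x : P, symmDiff (s : Set P) t = {x}
  symm := ⟨fun s t ⟨x, hx⟩ => ⟨x, by rwa [symmDiff_comm]⟩⟩
  loopless := ⟨fun s ⟨x, hx⟩ =>
    Set.singleton_ne_empty x (by rw [← hx, symmDiff_self, Set.bot_eq_empty])⟩

namespace lowerSetGraph

theorem adj_of_coe_eq_sdiff_singleton {P : Type*} [LE P] {s s' : LowerSet P} {x : P} (hx : x ∈ s)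
    (hs' : (s' : Set P) = ↑s \ {x}) : (lowerSetGraph P).Adj s s' := by
  have hxs : {x} ⊆ (s : Set P) := Set.singleton_subset_iff.mpr hx
  refine ⟨x, ?_⟩
  rw [hs', symmDiff_of_ge Set.sdiff_subset, Set.sdiff_sdiff_cancel_left hxs]

variable {P : Type*} [PartialOrder P] {s t : LowerSet P}

theorem isLowerSet_sdiff_singleton_of_maximal {x : P} (hx : Maximal (· ∈ (s \ t : Set P)) x) :
    IsLowerSet (s \ {x} : Set P) :=
  s.lower.erase fun _ hy hxy =>
    (hx.eq_of_le ⟨hy, fun hyt => hx.prop.2 (t.lower hxy hyt)⟩ hxy).symm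

theorem reachable_of_ge (hts : t ≤ s) (hfin : (s \ t : Set P).Finite) :
    (lowerSetGraph P).Reachable s t := by
  induction hn : (s \ t : Set P).ncard generalizing s with
  | zero =>
    have hst : s ≤ t := Set.sdiff_eq_empty.mp ((Set.ncard_eq_zero hfin).mp hn)
    rw [hst.antisymm hts]
  | succ n ih =>
    obtain ⟨x, hx⟩ := hfin.exists_maximal (Set.nonempty_of_ncard_ne_zero (by omega))
    let s' : LowerSet P := ⟨s \ {x}, isLowerSet_sdiff_singleton_of_maximal hx⟩
    have hadj : (lowerSetGraph P).Adj s s' := adj_of_coe_eq_sdiff_singleton hx.prop.1 rfl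
    have hts' : t ≤ s' := Set.subset_sdiff_singleton hts hx.prop.2
    have hdiff : (s' \ t : Set P) = (s \ t : Set P) \ {x} := Set.sdiff_sdiff_comm
    have hcard : (s' \ t : Set P).ncard = n := by
      rw [hdiff, Set.ncard_sdiff_singleton_of_mem hx.prop, hn, Nat.add_sub_cancel]
    exact hadj.reachable.trans (ih hts' (hdiff ▸ hfin.sdiff) hcard)

theorem reachable_of_finite_symmDiff (hfin : (symmDiff s t : Set P).Finite) :
    (lowerSetGraph P).Reachable s t := by
  have hs : (lowerSetGraph P).Reachable s (s ⊓ t) := by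
    refine reachable_of_ge inf_le_left (hfin.subset ?_)
    rw [LowerSet.coe_inf, Set.sdiff_self_inter]
    exact Set.subset_union_left
  have ht : (lowerSetGraph P).Reachable t (s ⊓ t) := by
    refine reachable_of_ge inf_le_right (hfin.subset ?_)
    rw [LowerSet.coe_inf, Set.sdiff_inter_self_eq_sdiff]
    exact Set.subset_union_right
  exact hs.trans ht.symm

end lowerSetGraph

theorem lowerSet_graph_connected_general {P : Type*} [PartialOrder P]
    (s t : Set P) (hs : IsLowerSet s) (ht : IsLowerSet t) (hfin : (symmDiff s t).Finite) :
    ∃ (n : ℕ) (c : ℕ → Set P),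
      (∀ m ≤ n, IsLowerSet (c m)) ∧ c 0 = s ∧ c n = t ∧
      ∀ m < n, ∃ x : P, symmDiff (c m) (c (m + 1)) = {x} := by
  obtain ⟨w⟩ : (lowerSetGraph P).Reachable ⟨s, hs⟩ ⟨t, ht⟩ :=
    lowerSetGraph.reachable_of_finite_symmDiff hfin
  exact ⟨w.length, fun m => w.getVert m, fun m _ => (w.getVert m).lower,
    congrArg _ w.getVert_zero, congrArg _ w.getVert_length, fun m hm => w.adj_getVert_succ hm⟩

/-- The graph on the lower sets of a finite poset `P`, in which two lower sets
are adjacent iff their symmetric difference is a singleton, is connected: any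
two lower sets `s` and `t` are joined by a path `s = c 0, c 1, …, c n = t` of
lower sets in which consecutive terms have symmetric difference consisting of
exactly one element of `P`. -/
theorem lowerSet_graph_connected {P : Type*} [Fintype P] [PartialOrder P]
    (s t : Set P) (hs : IsLowerSet s) (ht : IsLowerSet t) :
    ∃ (n : ℕ) (c : ℕ → Set P),
      (∀ m ≤ n, IsLowerSet (c m)) ∧ c 0 = s ∧ c n = t ∧
      ∀ m < n, ∃ x : P, symmDiff (c m) (c (m + 1)) = {x} :=
  lowerSet_graph_connected_general s t hs ht (Set.toFinite _)
end

section
/- Let P be a finite partially ordered set. Define the single-site update: for a subset I ⊆ P, an element x ∈ P, and a Boolean coin b, let up(I,x,true) = I ∪ {x} if I ∪ {x} is a lower set and I otherwise, and up(I,x,false) = I \ {x} if I \ {x} is a lower set and I otherwise. Then: (a) if I is a lower set, so is up(I,x,b); and (b) the update is monotone: if I and J are lower sets with I ⊆ J, then up(I,x,b) ⊆ up(J,x,b) for every x ∈ P and every Boolean b. -/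
attribute [local instance] Classical.propDecidable

/-- The single-site update of the Monte Carlo algorithm: at site `x` with coin
`b`, attempt to adjoin `x` (if `b = true`) or delete `x` (if `b = false`),
leaving `I` unchanged whenever the result would fail to be a lower set. -/
noncomputable def up {P : Type*} [PartialOrder P] (I : Set P) (x : P) (b : Bool) : Set P :=
  if b then (if IsLowerSet (I ∪ {x}) then I ∪ {x} else I)
  else (if IsLowerSet (I \ {x}) then I \ {x} else I)

/-! The update could break monotonicity only if adjoining `x` succeeds for `I` but fails for `J`,
or deleting `x` succeeds for `J` but fails for `I`. Neither happens, because lower sets are closed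
under union and intersection and, for `I ⊆ J`, `J ∪ {x} = J ∪ (I ∪ {x})` and
`I \ {x} = I ∩ (J \ {x})`. -/

section LE

variable {α : Type*} [LE α] {I J S : Set α}

theorem isLowerSet_union_of_subset (hJ : IsLowerSet J) (hIJ : I ⊆ J)
    (hIS : IsLowerSet (I ∪ S)) : IsLowerSet (J ∪ S) := by
  have union_eq : J ∪ S = J ∪ (I ∪ S) := by
    rw [← Set.union_assoc, Set.union_eq_self_of_subset_right hIJ]
  exact union_eq ▸ hJ.union hIS

theorem isLowerSet_sdiff_of_subset (hI : IsLowerSet I) (hIJ : I ⊆ J)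
    (hJS : IsLowerSet (J \ S)) : IsLowerSet (I \ S) := by
  have sdiff_eq : I \ S = I ∩ (J \ S) := by
    rw [← Set.inter_sdiff_assoc, Set.inter_eq_self_of_subset_left hIJ]
  exact sdiff_eq ▸ hI.inter hJS

end LE

section Update

variable {P : Type*} [PartialOrder P] {I J : Set P}

theorem up_true (I : Set P) (x : P) :
    up I x true = if IsLowerSet (I ∪ {x}) then I ∪ {x} else I :=
  if_pos rfl

theorem up_false (I : Set P) (x : P) :
    up I x false = if IsLowerSet (I \ {x}) then I \ {x} else I :=
  if_neg Bool.false_ne_true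

theorem isLowerSet_up (hI : IsLowerSet I) (x : P) (b : Bool) : IsLowerSet (up I x b) := by
  unfold up
  split_ifs <;> assumption

theorem up_true_subset_up_true (hJ : IsLowerSet J) (hIJ : I ⊆ J) (x : P) :
    up I x true ⊆ up J x true := by
  rw [up_true, up_true]
  split_ifs with hIx hJx hJx
  · exact Set.union_subset_union_left {x} hIJ
  · exact absurd (isLowerSet_union_of_subset hJ hIJ hIx) hJx
  · exact hIJ.trans Set.subset_union_left
  · exact hIJ

theorem up_false_subset_up_false (hI : IsLowerSet I) (hIJ : I ⊆ J) (x : P) :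
    up I x false ⊆ up J x false := by
  rw [up_false, up_false]
  split_ifs with hIx hJx hJx
  · exact Set.sdiff_subset_sdiff_left hIJ
  · exact Set.sdiff_subset.trans hIJ
  · exact absurd (isLowerSet_sdiff_of_subset hI hIJ hJx) hIx
  · exact hIJ

end Update

theorem up_isLowerSet_and_monotone_general {P : Type*} [PartialOrder P] :
    (∀ (I : Set P) (x : P) (b : Bool), IsLowerSet I → IsLowerSet (up I x b)) ∧
    (∀ (I J : Set P), IsLowerSet I → IsLowerSet J → I ⊆ J →
      ∀ (x : P) (b : Bool), up I x b ⊆ up J x b) := by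
  refine ⟨fun I x b hI => isLowerSet_up hI x b, fun I J hI hJ hIJ x b => ?_⟩
  cases b with
  | true => exact up_true_subset_up_true hJ hIJ x
  | false => exact up_false_subset_up_false hI hIJ x

/-- (a) The single-site update sends lower sets to lower sets, and
(b) it is monotone with respect to inclusion: if lower sets satisfy `I ⊆ J`,
then `up I x b ⊆ up J x b` for every site `x` and coin `b`. -/
theorem up_isLowerSet_and_monotone {P : Type*} [Fintype P] [PartialOrder P] :
    (∀ (I : Set P) (x : P) (b : Bool), IsLowerSet I → IsLowerSet (up I x b)) ∧
    (∀ (I J : Set P), IsLowerSet I → IsLowerSet J → I ⊆ J →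
      ∀ (x : P) (b : Bool), up I x b ⊆ up J x b) :=
  up_isLowerSet_and_monotone_general
end

section
/- Let P be a finite partially ordered set and fix x ∈ P. For every lower set J of P, the number of pairs (I, b), with I a lower set of P and b a Boolean, such that up(I,x,b) = J is exactly 2. (Hence each single-site randomization move, performed with a fair coin, preserves the uniform distribution on the set of lower sets of P.) -/
/-!
Write `I ↦ toggle x I` for the involution of the lower sets that switches the membership of `x`
whenever the result is again a lower set.  At a lower set `I` one face of the coin fixes `I` and the
other toggles it; which face does which depends on whether `x ∈ I`.  So a pair `(I, b)` is sent to
`J` exactly when `b` is the fixing face at `I = J` or the toggling face at `I = toggle x J`.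
-/

attribute [local instance] Classical.propDecidable

open scoped symmDiff

section Toggle

variable {P : Type*} [LE P] {x : P} {I J : Set P}

/-- The toggle at `x` of the theory of order ideals: switch the membership of `x` in `I` if this
yields a lower set, and leave `I` alone otherwise. It is an involution on lower sets. -/
noncomputable def toggle (x : P) (I : Set P) : Set P :=
  if IsLowerSet (I ∆ {x}) then I ∆ {x} else I

theorem isLowerSet_toggle (hI : IsLowerSet I) : IsLowerSet (toggle x I) := by
  unfold toggle
  split_ifs with h
  · exact h
  · exact hI

theorem toggle_toggle (hI : IsLowerSet I) : toggle x (toggle x I) = I := by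
  by_cases h : IsLowerSet (I ∆ {x})
  · simp only [toggle, if_pos h, symmDiff_symmDiff_cancel_right, if_pos hI]
  · simp only [toggle, if_neg h]

theorem toggle_eq_iff_eq_toggle (hI : IsLowerSet I) (hJ : IsLowerSet J) :
    toggle x I = J ↔ I = toggle x J := by
  constructor
  · rintro rfl
    exact (toggle_toggle hI).symm
  · rintro rfl
    exact toggle_toggle hJ

theorem toggle_of_mem (hx : x ∈ I) :
    toggle x I = if IsLowerSet (I \ {x}) then I \ {x} else I := by
  rw [toggle, symmDiff_of_ge (Set.singleton_subset_iff.mpr hx)]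

theorem toggle_of_notMem (hx : x ∉ I) :
    toggle x I = if IsLowerSet (I ∪ {x}) then I ∪ {x} else I := by
  rw [toggle, (Set.disjoint_singleton_right.mpr hx).symmDiff_eq_sup]
  rfl

end Toggle

section Update

variable {P : Type*} [PartialOrder P] {J : Set P}

theorem up_decide_mem (I : Set P) (x : P) : up I x (decide (x ∈ I)) = I := by
  by_cases hx : x ∈ I <;> simp [up, hx]

theorem up_not_decide_mem (I : Set P) (x : P) : up I x (!decide (x ∈ I)) = toggle x I := by
  by_cases hx : x ∈ I
  · simp [up, hx, toggle_of_mem]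
  · simp [up, hx, toggle_of_notMem]

theorem setOf_isLowerSet_and_up_eq (x : P) (hJ : IsLowerSet J) :
    {p : Set P × Bool | IsLowerSet p.1 ∧ up p.1 x p.2 = J} =
      {(J, decide (x ∈ J)), (toggle x J, !decide (x ∈ toggle x J))} := by
  ext ⟨I, b⟩
  simp only [Set.mem_ofPred_eq, Set.mem_insert_iff, Set.mem_singleton_iff, Prod.mk.injEq]
  constructor
  · rintro ⟨hI, hup⟩
    obtain rfl | rfl : b = decide (x ∈ I) ∨ b = !decide (x ∈ I) := Bool.eq_or_eq_not b _
    · rw [up_decide_mem] at hup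
      exact .inl ⟨hup, hup ▸ rfl⟩
    · rw [up_not_decide_mem, toggle_eq_iff_eq_toggle hI hJ] at hup
      exact .inr ⟨hup, hup ▸ rfl⟩
  · rintro (⟨rfl, rfl⟩ | ⟨rfl, rfl⟩)
    · exact ⟨hJ, up_decide_mem I x⟩
    · exact ⟨isLowerSet_toggle hJ, by rw [up_not_decide_mem, toggle_toggle hJ]⟩

end Update

theorem up_doubly_stochastic_general {P : Type*} [PartialOrder P] (x : P)
    (J : Set P) (hJ : IsLowerSet J) :
    Nat.card {p : Set P × Bool // IsLowerSet p.1 ∧ up p.1 x p.2 = J} = 2 := by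
  have fix_ne_toggle : (J, decide (x ∈ J)) ≠ (toggle x J, !decide (x ∈ toggle x J)) := by
    intro h
    obtain ⟨hset, hcoin⟩ := Prod.mk.inj h
    rw [← hset] at hcoin
    exact Bool.not_ne_self _ hcoin.symm
  calc Nat.card {p : Set P × Bool // IsLowerSet p.1 ∧ up p.1 x p.2 = J}
      = {p : Set P × Bool | IsLowerSet p.1 ∧ up p.1 x p.2 = J}.ncard :=
        Nat.card_coe_set_eq _
    _ = 2 := by rw [setOf_isLowerSet_and_up_eq x hJ, Set.ncard_pair fix_ne_toggle]

/-- The single-site fair-coin Markov chain on lower sets is doubly stochastic: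
for each lower set `J`, exactly two pairs `(I, b)` of a lower set `I` and a
coin `b` satisfy `up I x b = J`.  Hence the uniform distribution on lower sets
is stationary. -/
theorem up_doubly_stochastic {P : Type*} [Fintype P] [PartialOrder P] (x : P)
    (J : Set P) (hJ : IsLowerSet J) :
    Nat.card {p : Set P × Bool // IsLowerSet p.1 ∧ up p.1 x p.2 = J} = 2 := by
  exact up_doubly_stochastic_general x J hJ
end

section
/- Let P be a finite partially ordered set and fix x ∈ P. For all lower sets I and J of P, the number of Booleans b with up(I,x,b) = J equals the number of Booleans b with up(J,x,b) = I. (The single-site fair-coin transition kernel on lower sets is symmetric, hence reversible with respect to the uniform distribution.) -/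
attribute [local instance] Classical.propDecidable

/-!
A coin that changes the lower set adds or removes exactly the point `x`, so the opposite coin undoes
the change: between distinct lower sets, coin reversal is a bijection from the coins leading from
`I` to `J` onto those leading from `J` to `I`.
-/

theorem union_singleton_eq_iff_sdiff_singleton_eq {α : Type*} {s t : Set α} {a : α}
    (hst : s ≠ t) : s ∪ {a} = t ↔ t \ {a} = s := by
  constructor
  · rintro rfl
    have ha : a ∉ s := fun ha ↦
      hst (Set.union_eq_self_of_subset_right (Set.singleton_subset_iff.mpr ha)).symm
    rw [Set.union_sdiff_right, Set.sdiff_singleton_eq_self ha]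
  · rintro rfl
    have ha : a ∈ t := by
      by_contra ha
      exact hst (Set.sdiff_singleton_eq_self ha)
    exact Set.sdiff_union_of_subset (Set.singleton_subset_iff.mpr ha)

section

variable {P : Type*} [PartialOrder P] {I J : Set P}

theorem up_true_eq_iff_union_eq (x : P) (hJ : IsLowerSet J) (hIJ : I ≠ J) :
    up I x true = J ↔ I ∪ {x} = J := by
  rw [up, if_pos rfl]
  split_ifs with hunion
  · rfl
  · exact iff_of_false hIJ fun h ↦ hunion (h ▸ hJ)

theorem up_false_eq_iff_sdiff_eq (x : P) (hJ : IsLowerSet J) (hIJ : I ≠ J) :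
    up I x false = J ↔ I \ {x} = J := by
  rw [up, if_neg Bool.false_ne_true]
  split_ifs with hsdiff
  · rfl
  · exact iff_of_false hIJ fun h ↦ hsdiff (h ▸ hJ)

theorem up_true_eq_iff_up_false_eq (x : P) (hI : IsLowerSet I) (hJ : IsLowerSet J) (hIJ : I ≠ J) :
    up I x true = J ↔ up J x false = I :=
  calc
    up I x true = J ↔ I ∪ {x} = J := up_true_eq_iff_union_eq x hJ hIJ
    _ ↔ J \ {x} = I := union_singleton_eq_iff_sdiff_singleton_eq hIJ
    _ ↔ up J x false = I := (up_false_eq_iff_sdiff_eq x hI hIJ.symm).symm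

theorem up_eq_iff_up_not_eq (x : P) (hI : IsLowerSet I) (hJ : IsLowerSet J) (hIJ : I ≠ J) :
    ∀ b : Bool, up I x b = J ↔ up J x (!b) = I
  | true => up_true_eq_iff_up_false_eq x hI hJ hIJ
  | false => (up_true_eq_iff_up_false_eq x hJ hI hIJ.symm).symm

theorem up_symmetric_general (x : P) (hI : IsLowerSet I) (hJ : IsLowerSet J) :
    Nat.card {b : Bool // up I x b = J} = Nat.card {b : Bool // up J x b = I} := by
  rcases eq_or_ne I J with rfl | hIJ
  · rfl
  · exact Nat.card_congr (Equiv.boolNot.subtypeEquiv (up_eq_iff_up_not_eq x hI hJ hIJ))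

end

/-- The single-site fair-coin transition kernel on lower sets is symmetric:
for lower sets `I` and `J`, the number of coins `b` with `up I x b = J` equals
the number of coins `b` with `up J x b = I`. -/
theorem up_symmetric {P : Type*} [Fintype P] [PartialOrder P] (x : P)
    (I J : Set P) (hI : IsLowerSet I) (hJ : IsLowerSet J) :
    Nat.card {b : Bool // up I x b = J} = Nat.card {b : Bool // up J x b = I} :=
  up_symmetric_general x hI hJ
end

section
/- Let G be a simple graph on a vertex set V together with a 2-coloring c : V → Bool such that every edge of G joins a vertex colored true (black) to a vertex colored false (white). For a subset S ⊆ V write S_B = S ∩ c⁻¹(true) and S_W = S ∩ c⁻¹(false). If S and T are independent sets of G, then both (S_B ∪ T_B) ∪ (S_W ∩ T_W) and (S_B ∩ T_B) ∪ (S_W ∪ T_W) are independent sets of G. (These operations are the join and meet making the set of independent sets of a bipartite graph a distributive lattice.) -/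
/-- A set of vertices is independent if no two of its elements are adjacent. -/
def IsIndepSet {V : Type*} (G : SimpleGraph V) (S : Set V) : Prop :=
  ∀ u ∈ S, ∀ v ∈ S, ¬ G.Adj u v

/-!
An edge from `S ∪ T` to `S ∩ T` would lie inside `S` or inside `T`. The join is the union of a
monochromatic subset of `S ∪ T`, which is independent, and a subset of `S ∩ T`; the meet is the join
with the two colors exchanged.
-/

section

variable {V : Type*} {G : SimpleGraph V} {A B S T X Y : Set V}

theorem isIndepSet_preimage_singleton {α : Type*} {c : V → α}
    (hc : ∀ u v : V, G.Adj u v → c u ≠ c v) (a : α) : IsIndepSet G (c ⁻¹' {a}) :=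
  fun u hu v hv huv ↦ hc u v huv (hu.trans hv.symm)

namespace IsIndepSet

theorem mono (hT : IsIndepSet G T) (hST : S ⊆ T) : IsIndepSet G S :=
  fun u hu v hv ↦ hT u (hST hu) v (hST hv)

theorem union (hA : IsIndepSet G A) (hB : IsIndepSet G B)
    (hAB : ∀ u ∈ A, ∀ v ∈ B, ¬ G.Adj u v) : IsIndepSet G (A ∪ B) := by
  rintro u (huA | huB) v (hvA | hvB)
  · exact hA u huA v hvA
  · exact hAB u huA v hvB
  · exact fun huv ↦ hAB v hvA u huB huv.symm
  · exact hB u huB v hvB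

theorem not_adj_of_mem_union_of_mem_inter (hS : IsIndepSet G S) (hT : IsIndepSet G T) {u v : V}
    (hu : u ∈ S ∪ T) (hv : v ∈ S ∩ T) : ¬ G.Adj u v :=
  hu.elim (fun huS ↦ hS u huS v hv.1) (fun huT ↦ hT u huT v hv.2)

theorem union_of_subset_union_of_subset_inter (hS : IsIndepSet G S) (hT : IsIndepSet G T)
    (hA : IsIndepSet G A) (hAST : A ⊆ S ∪ T) (hBST : B ⊆ S ∩ T) : IsIndepSet G (A ∪ B) :=
  hA.union (hS.mono (hBST.trans Set.inter_subset_left))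
    fun _ hu _ hv ↦ hS.not_adj_of_mem_union_of_mem_inter hT (hAST hu) (hBST hv)

theorem join (hX : IsIndepSet G X) (Y : Set V) (hS : IsIndepSet G S) (hT : IsIndepSet G T) :
    IsIndepSet G (((S ∩ X) ∪ (T ∩ X)) ∪ ((S ∩ Y) ∩ (T ∩ Y))) :=
  hS.union_of_subset_union_of_subset_inter hT
    (hX.mono (Set.union_subset Set.inter_subset_right Set.inter_subset_right))
    (Set.union_subset_union Set.inter_subset_left Set.inter_subset_left)
    (Set.inter_subset_inter Set.inter_subset_left Set.inter_subset_left)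

end IsIndepSet

theorem indepSet_join_meet_general (hX : IsIndepSet G X) (hY : IsIndepSet G Y)
    (hS : IsIndepSet G S) (hT : IsIndepSet G T) :
    IsIndepSet G (((S ∩ X) ∪ (T ∩ X)) ∪ ((S ∩ Y) ∩ (T ∩ Y))) ∧
      IsIndepSet G (((S ∩ X) ∩ (T ∩ X)) ∪ ((S ∩ Y) ∪ (T ∩ Y))) := by
  refine ⟨hX.join Y hS hT, ?_⟩
  rw [Set.union_comm]
  exact hY.join X hS hT

end

/-- For a bipartite graph (2-colored so that every edge joins a black (`true`)
vertex to a white (`false`) vertex), the join and meet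
`(S_B ∪ T_B) ∪ (S_W ∩ T_W)` and `(S_B ∩ T_B) ∪ (S_W ∪ T_W)` of two independent
sets are again independent sets.  (These operations make the independent sets
of a bipartite graph a distributive lattice.) -/
theorem indepSet_join_meet {V : Type*} (G : SimpleGraph V) (c : V → Bool)
    (hc : ∀ u v : V, G.Adj u v → c u ≠ c v)
    (S T : Set V) (hS : IsIndepSet G S) (hT : IsIndepSet G T) :
    IsIndepSet G (((S ∩ c ⁻¹' {true}) ∪ (T ∩ c ⁻¹' {true})) ∪
        ((S ∩ c ⁻¹' {false}) ∩ (T ∩ c ⁻¹' {false}))) ∧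
    IsIndepSet G (((S ∩ c ⁻¹' {true}) ∩ (T ∩ c ⁻¹' {true})) ∪
        ((S ∩ c ⁻¹' {false}) ∪ (T ∩ c ⁻¹' {false}))) :=
  indepSet_join_meet_general (isIndepSet_preimage_singleton hc true)
    (isIndepSet_preimage_singleton hc false) hS hT
end

section
/- Let n be a positive natural number. Call an n × n integer matrix A an alternating sign matrix if every row sum and every column sum equals 1 and every partial row sum Σ_{j' ≤ j} A(i,j') and every partial column sum Σ_{i' ≤ i} A(i',j) lies in {0,1}. For an alternating sign matrix A define its corner-sum array h_A on {0,…,n} × {0,…,n} by h_A(i,j) = Σ_{i' < i} Σ_{j' < j} A(i',j'). Then for any two n × n alternating sign matrices A and B there exist n × n alternating sign matrices C and D such that h_C is the entrywise minimum of h_A and h_B and h_D is the entrywise maximum of h_A and h_B. (Hence the set of n × n alternating sign matrices becomes a distributive lattice.) -/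
open Finset

/-- An `n × n` integer matrix is an alternating sign matrix if every row sum
and every column sum equals `1` and every partial row sum and every partial
column sum lies in `{0, 1}`. -/
def IsASM {n : ℕ} (A : Matrix (Fin n) (Fin n) ℤ) : Prop :=
  (∀ i, ∑ j, A i j = 1) ∧ (∀ j, ∑ i, A i j = 1) ∧
  (∀ i j, (∑ j' ∈ univ.filter (fun j' => j' ≤ j), A i j') ∈ ({0, 1} : Set ℤ)) ∧
  (∀ i j, (∑ i' ∈ univ.filter (fun i' => i' ≤ i), A i' j) ∈ ({0, 1} : Set ℤ))

/-- The corner-sum array of an `n × n` matrix: `h_A i j = Σ_{i' < i} Σ_{j' < j} A i' j'`. -/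
def cornerSum {n : ℕ} (A : Matrix (Fin n) (Fin n) ℤ) (i j : Fin (n + 1)) : ℤ :=
  ∑ i' ∈ univ.filter (fun i' : Fin n => (i' : ℕ) < (i : ℕ)),
    ∑ j' ∈ univ.filter (fun j' : Fin n => (j' : ℕ) < (j : ℕ)), A i' j'

/-!
An alternating sign matrix is the mixed second difference of its corner-sum array. Under this
correspondence, the partial row and column sums in `{0, 1}` are the increments of the array, and
the unit row and column sums prescribe its boundary values. Minima and maxima preserve both: if
`a < b` are terms of two integer sequences with increments in `{0, 1}`, then
`a' ≤ a + 1 ≤ b ≤ b'` for the next terms, so the sequences cannot cross without meeting.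
-/

section PartialSums

variable {n : ℕ}

lemma filter_val_lt_castSucc (i : Fin n) :
    ({k | k.val < i.castSucc.val} : Finset (Fin n)) = Iio i := by
  ext k
  simp

lemma filter_val_lt_succ (i : Fin n) :
    ({k | k.val < i.succ.val} : Finset (Fin n)) = Iic i := by
  ext k
  simp

lemma sum_val_lt_succ_sub_castSucc {G : Type*} [AddCommGroup G] (g : Fin (n + 1) → G)
    (i : Fin (n + 1)) :
    ∑ k : Fin n with k.val < i.val, (g k.succ - g k.castSucc) = g i - g 0 := by
  cases i using Fin.cases with
  | zero => simp
  | succ i => rw [filter_val_lt_succ, Fin.sum_Iic_sub]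

end PartialSums

section CornerSum

variable {n : ℕ}

lemma cornerSum_transpose (A : Matrix (Fin n) (Fin n) ℤ) (i j : Fin (n + 1)) :
    cornerSum A.transpose i j = cornerSum A j i :=
  sum_comm

lemma cornerSum_zero_left (A : Matrix (Fin n) (Fin n) ℤ) (j : Fin (n + 1)) :
    cornerSum A 0 j = 0 := by
  simp [cornerSum]

lemma cornerSum_last_eq_sum (A : Matrix (Fin n) (Fin n) ℤ) (i : Fin (n + 1)) :
    cornerSum A i (Fin.last n) = ∑ i' : Fin n with i'.val < i.val, ∑ j, A i' j := by
  simp [cornerSum]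

lemma cornerSum_succ_sub_castSucc (A : Matrix (Fin n) (Fin n) ℤ) (i : Fin n) (j : Fin (n + 1)) :
    cornerSum A i.succ j - cornerSum A i.castSucc j = ∑ j' : Fin n with j'.val < j.val, A i j' := by
  rw [cornerSum, cornerSum, filter_val_lt_succ, filter_val_lt_castSucc, ← sum_Iio_add_eq_sum_Iic,
    add_sub_cancel_left]

end CornerSum

/-- The mixed second difference of an array `H`, indexed from `0`: the inverse of the corner-sum
construction on arrays vanishing along row `0` and column `0`. -/
def mixedDifference {m n : ℕ} {G : Type*} [AddCommGroup G] (H : Fin (m + 1) → Fin (n + 1) → G) :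
    Matrix (Fin m) (Fin n) G :=
  fun i j => (H i.succ j.succ - H i.castSucc j.succ) -
    (H i.succ j.castSucc - H i.castSucc j.castSucc)

lemma sum_row_mixedDifference {m n : ℕ} {G : Type*} [AddCommGroup G]
    (H : Fin (m + 1) → Fin (n + 1) → G) (i : Fin m) (j : Fin (n + 1)) :
    ∑ j' : Fin n with j'.val < j.val, mixedDifference H i j' =
      (H i.succ j - H i.castSucc j) - (H i.succ 0 - H i.castSucc 0) :=
  sum_val_lt_succ_sub_castSucc (fun k => H i.succ k - H i.castSucc k) j

lemma cornerSum_mixedDifference {n : ℕ} (H : Fin (n + 1) → Fin (n + 1) → ℤ)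
    (i j : Fin (n + 1)) :
    cornerSum (mixedDifference H) i j = (H i j - H 0 j) - (H i 0 - H 0 0) := by
  simp only [cornerSum, sum_row_mixedDifference, sum_sub_distrib]
  simp only [← sum_sub_distrib, sum_val_lt_succ_sub_castSucc (H · j),
    sum_val_lt_succ_sub_castSucc (H · 0)]

lemma min_sub_min_mem_zero_one {a a' b b' : ℤ} (ha : a' - a ∈ ({0, 1} : Set ℤ))
    (hb : b' - b ∈ ({0, 1} : Set ℤ)) : min a' b' - min a b ∈ ({0, 1} : Set ℤ) := by
  simp only [Set.mem_insert_iff, Set.mem_singleton_iff] at *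
  omega

lemma max_sub_max_mem_zero_one {a a' b b' : ℤ} (ha : a' - a ∈ ({0, 1} : Set ℤ))
    (hb : b' - b ∈ ({0, 1} : Set ℤ)) : max a' b' - max a b ∈ ({0, 1} : Set ℤ) := by
  simp only [Set.mem_insert_iff, Set.mem_singleton_iff] at *
  omega

/-- The arrays that occur as corner sums of alternating sign matrices, characterized by their four
boundary values and by their increments along rows and columns. -/
structure IsCornerSumArray {n : ℕ} (H : Fin (n + 1) → Fin (n + 1) → ℤ) : Prop where
  zero_left : ∀ j, H 0 j = 0
  zero_right : ∀ i, H i 0 = 0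
  last_left : ∀ j, H (Fin.last n) j = (j : ℕ)
  last_right : ∀ i, H i (Fin.last n) = (i : ℕ)
  step_left : ∀ (i : Fin n) (j), H i.succ j - H i.castSucc j ∈ ({0, 1} : Set ℤ)
  step_right : ∀ (i) (j : Fin n), H i j.succ - H i j.castSucc ∈ ({0, 1} : Set ℤ)

namespace IsCornerSumArray

variable {n : ℕ} {H K : Fin (n + 1) → Fin (n + 1) → ℤ}

lemma swap (hH : IsCornerSumArray H) : IsCornerSumArray (Function.swap H) where
  zero_left := hH.zero_right
  zero_right := hH.zero_left
  last_left := hH.last_right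
  last_right := hH.last_left
  step_left i j := hH.step_right j i
  step_right i j := hH.step_left j i

theorem inf (hH : IsCornerSumArray H) (hK : IsCornerSumArray K) : IsCornerSumArray (H ⊓ K) where
  zero_left j := by simp [hH.zero_left, hK.zero_left]
  zero_right i := by simp [hH.zero_right, hK.zero_right]
  last_left j := by simp [hH.last_left, hK.last_left]
  last_right i := by simp [hH.last_right, hK.last_right]
  step_left i j := min_sub_min_mem_zero_one (hH.step_left i j) (hK.step_left i j)
  step_right i j := min_sub_min_mem_zero_one (hH.step_right i j) (hK.step_right i j)

theorem sup (hH : IsCornerSumArray H) (hK : IsCornerSumArray K) : IsCornerSumArray (H ⊔ K) where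
  zero_left j := by simp [hH.zero_left, hK.zero_left]
  zero_right i := by simp [hH.zero_right, hK.zero_right]
  last_left j := by simp [hH.last_left, hK.last_left]
  last_right i := by simp [hH.last_right, hK.last_right]
  step_left i j := max_sub_max_mem_zero_one (hH.step_left i j) (hK.step_left i j)
  step_right i j := max_sub_max_mem_zero_one (hH.step_right i j) (hK.step_right i j)

end IsCornerSumArray

namespace IsASM

variable {n : ℕ} {A : Matrix (Fin n) (Fin n) ℤ}

lemma transpose (hA : IsASM A) : IsASM A.transpose :=
  let ⟨row_sum, col_sum, row_partial, col_partial⟩ := hA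
  ⟨col_sum, row_sum, fun i j => col_partial j i, fun i j => row_partial j i⟩

lemma cornerSum_last_right (hA : IsASM A) (i : Fin (n + 1)) :
    cornerSum A i (Fin.last n) = (i : ℕ) := by
  simp [cornerSum_last_eq_sum, hA.1, Fin.card_filter_val_lt, Fin.is_le i]

lemma cornerSum_step_left (hA : IsASM A) (i : Fin n) (j : Fin (n + 1)) :
    cornerSum A i.succ j - cornerSum A i.castSucc j ∈ ({0, 1} : Set ℤ) := by
  rw [cornerSum_succ_sub_castSucc]
  cases j using Fin.cases with
  | zero => simp
  | succ j =>
    rw [filter_val_lt_succ, ← filter_ge_eq_Iic]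
    exact hA.2.2.1 i j

theorem isCornerSumArray_cornerSum (hA : IsASM A) : IsCornerSumArray (cornerSum A) where
  zero_left := cornerSum_zero_left A
  zero_right i := by rw [← cornerSum_transpose, cornerSum_zero_left]
  last_left j := by rw [← cornerSum_transpose, hA.transpose.cornerSum_last_right]
  last_right := hA.cornerSum_last_right
  step_left := hA.cornerSum_step_left
  step_right i j := by
    simpa only [cornerSum_transpose] using hA.transpose.cornerSum_step_left j i

end IsASM

namespace IsCornerSumArray

variable {n : ℕ} {A : Matrix (Fin n) (Fin n) ℤ}

lemma transpose (hA : IsCornerSumArray (cornerSum A)) :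
    IsCornerSumArray (cornerSum A.transpose) := by
  have cornerSum_eq : cornerSum A.transpose = Function.swap (cornerSum A) :=
    funext₂ (cornerSum_transpose A)
  exact cornerSum_eq ▸ hA.swap

lemma sum_row (hA : IsCornerSumArray (cornerSum A)) (i : Fin n) : ∑ j, A i j = 1 := by
  have increment := cornerSum_succ_sub_castSucc A i (Fin.last n)
  rw [hA.last_right, hA.last_right] at increment
  simpa using increment.symm

lemma sum_row_le_mem (hA : IsCornerSumArray (cornerSum A)) (i j : Fin n) :
    ∑ j' with j' ≤ j, A i j' ∈ ({0, 1} : Set ℤ) := by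
  rw [filter_ge_eq_Iic, ← filter_val_lt_succ, ← cornerSum_succ_sub_castSucc]
  exact hA.step_left i j.succ

theorem isASM (hA : IsCornerSumArray (cornerSum A)) : IsASM A :=
  ⟨hA.sum_row, hA.transpose.sum_row, hA.sum_row_le_mem,
    fun i j => hA.transpose.sum_row_le_mem j i⟩

theorem exists_isASM {H : Fin (n + 1) → Fin (n + 1) → ℤ} (hH : IsCornerSumArray H) :
    ∃ A : Matrix (Fin n) (Fin n) ℤ, IsASM A ∧ cornerSum A = H := by
  have cornerSum_eq : cornerSum (mixedDifference H) = H := by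
    ext i j
    simp only [cornerSum_mixedDifference, hH.zero_left, hH.zero_right, sub_zero]
  exact ⟨mixedDifference H, (cornerSum_eq.symm ▸ hH).isASM, cornerSum_eq⟩

end IsCornerSumArray

/-- For any two `n × n` alternating sign matrices `A` and `B` there are
alternating sign matrices `C` and `D` whose corner-sum arrays are the
entrywise minimum, resp. maximum, of those of `A` and `B`.  Hence the `n × n`
alternating sign matrices form a distributive lattice. -/
theorem asm_lattice {n : ℕ} (hn : 0 < n) (A B : Matrix (Fin n) (Fin n) ℤ)
    (hA : IsASM A) (hB : IsASM B) :
    ∃ C D : Matrix (Fin n) (Fin n) ℤ, IsASM C ∧ IsASM D ∧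
      (∀ i j : Fin (n + 1), cornerSum C i j = min (cornerSum A i j) (cornerSum B i j)) ∧
      (∀ i j : Fin (n + 1), cornerSum D i j = max (cornerSum A i j) (cornerSum B i j)) := by
  have hA' := hA.isCornerSumArray_cornerSum
  have hB' := hB.isCornerSumArray_cornerSum
  obtain ⟨C, hC, cornerSum_C⟩ := (hA'.inf hB').exists_isASM
  obtain ⟨D, hD, cornerSum_D⟩ := (hA'.sup hB').exists_isASM
  exact ⟨C, D, hC, hD, fun i j => congr_fun₂ cornerSum_C i j, fun i j => congr_fun₂ cornerSum_D i j⟩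
end

section
/- For every natural number n, the number of antitone functions f : Fin n → ℕ satisfying f(i) ≤ n − 1 − i for all i < n equals the n-th Catalan number. (Equivalently, the minimal-length lattice paths of length 2n from (0,n) to (n,0) that do not stray outside the triangle with vertices (0,0), (n,0), (0,n) are counted by the Catalan number.) -/
/-!
The partitions counted here satisfy a Pascal-type recurrence: according to whether the last part
is zero, either drop that part or subtract `1` from every part, that is, remove either the last row
or the first column of the bounding shape. For the staircase `(n, n - 1, …)` cut off after `m`
rows, this is the recurrence of the ballot numbers `(n + m).choose n - (n + m).choose (n + 1)`,
which agree with the count on the boundary `m = 0` (only the empty partition) and vanish on the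
boundary `m = n + 1`, where the strict bound on the last row leaves no partition.
For `m = n` the ballot number is the Catalan number.
-/

/-- The partitions `f 0 ≥ f 1 ≥ … ≥ f (m - 1)`, zero parts allowed, whose parts are bounded by the
entries of `b`. The bound is strict, so that a zero entry of `b` excludes every partition. -/
def antitoneBelow {m : ℕ} (b : Fin m → ℕ) : Set (Fin m → ℕ) :=
  {f | Antitone f ∧ ∀ i, f i < b i}

/-- The first `m` entries of the staircase `(n, n - 1, …, 1, 0, 0, …)`: truncated subtraction makes
it continue with zeros. As a strict bound it encodes the shape `(n - 1, n - 2, …, 0)`. -/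
def staircase (m n : ℕ) : Fin m → ℕ := fun i => n - i

theorem antitone_snoc_iff {α : Type*} [Preorder α] {m : ℕ} {f : Fin m → α} {a : α} :
    Antitone (Fin.snoc f a : Fin (m + 1) → α) ↔ Antitone f ∧ ∀ i, a ≤ f i := by
  constructor
  · intro h
    exact ⟨fun i j hij => by simpa using h (Fin.castSucc_le_castSucc_iff.2 hij),
      fun i => by simpa using h (Fin.le_last i.castSucc)⟩
  · rintro ⟨hf, ha⟩ i j hij
    induction j using Fin.lastCases with
    | last => induction i using Fin.lastCases <;> simp [ha]
    | cast j =>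
      induction i using Fin.lastCases with
      | last => exact absurd hij (Fin.castSucc_lt_last j).not_ge
      | cast i => simpa using hf (Fin.castSucc_le_castSucc_iff.1 hij)

section antitoneBelow

variable {m : ℕ}

theorem finite_antitoneBelow (b : Fin m → ℕ) : (antitoneBelow b).Finite :=
  (Set.finite_Iic b).subset fun _ hf i => (hf.2 i).le

theorem ncard_antitoneBelow_of_isEmpty (b : Fin 0 → ℕ) : (antitoneBelow b).ncard = 1 := by
  refine Set.ncard_eq_one.2 ⟨Fin.elim0, ?_⟩
  ext f
  simp [antitoneBelow, Subsingleton.elim f Fin.elim0, Subsingleton.antitone]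

theorem antitoneBelow_eq_empty {b : Fin m → ℕ} {i : Fin m} (hi : b i = 0) :
    antitoneBelow b = ∅ :=
  Set.eq_empty_of_forall_notMem fun _ hf => Nat.not_lt_zero _ (hi ▸ hf.2 i)

theorem snoc_zero_mem_antitoneBelow_iff {b : Fin (m + 1) → ℕ} (hb : 0 < b (Fin.last m))
    {f : Fin m → ℕ} :
    (Fin.snoc f 0 : Fin (m + 1) → ℕ) ∈ antitoneBelow b ↔ f ∈ antitoneBelow (Fin.init b) := by
  simp [antitoneBelow, antitone_snoc_iff, Fin.forall_fin_succ', hb, Fin.init]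

theorem add_one_mem_antitoneBelow_iff {b f : Fin m → ℕ} :
    f + 1 ∈ antitoneBelow b ↔ f ∈ antitoneBelow (b - 1) := by
  simp [antitoneBelow, Antitone, Nat.lt_sub_iff_add_lt]

theorem antitoneBelow_sep_last_eq_zero {b : Fin (m + 1) → ℕ} (hb : 0 < b (Fin.last m)) :
    {f ∈ antitoneBelow b | f (Fin.last m) = 0} =
      (fun f : Fin m → ℕ => (Fin.snoc f 0 : Fin (m + 1) → ℕ)) '' antitoneBelow (Fin.init b) := by
  ext f
  constructor
  · rintro ⟨hf, hlast⟩
    have hsnoc : Fin.snoc (Fin.init f) 0 = f := hlast ▸ Fin.snoc_init_self f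
    exact ⟨Fin.init f, (snoc_zero_mem_antitoneBelow_iff hb).1 (hsnoc.symm ▸ hf), hsnoc⟩
  · rintro ⟨g, hg, rfl⟩
    exact ⟨(snoc_zero_mem_antitoneBelow_iff hb).2 hg, Fin.snoc_last _ _⟩

theorem antitoneBelow_sep_last_ne_zero (b : Fin (m + 1) → ℕ) :
    {f ∈ antitoneBelow b | f (Fin.last m) ≠ 0} = (· + 1) '' antitoneBelow (b - 1) := by
  ext f
  constructor
  · rintro ⟨hf, hlast⟩
    have hpos : 1 ≤ f := fun i => (Nat.one_le_iff_ne_zero.2 hlast).trans (hf.1 (Fin.le_last i))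
    have hadd : f - 1 + 1 = f := tsub_add_cancel_of_le hpos
    exact ⟨f - 1, add_one_mem_antitoneBelow_iff.1 (hadd.symm ▸ hf), hadd⟩
  · rintro ⟨g, hg, rfl⟩
    exact ⟨add_one_mem_antitoneBelow_iff.2 hg, Nat.succ_ne_zero _⟩

theorem ncard_antitoneBelow_succ {b : Fin (m + 1) → ℕ} (hb : 0 < b (Fin.last m)) :
    (antitoneBelow b).ncard =
      (antitoneBelow (Fin.init b)).ncard + (antitoneBelow (b - 1)).ncard := by
  rw [← Set.ncard_image_of_injective (antitoneBelow (Fin.init b))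
      (Fin.snoc_left_injective (α := fun _ => ℕ) 0),
    ← Set.ncard_image_of_injective (antitoneBelow (b - 1)) (add_left_injective 1),
    ← antitoneBelow_sep_last_eq_zero hb, ← antitoneBelow_sep_last_ne_zero b]
  exact (Set.ncard_inter_add_ncard_sdiff_eq_ncard _ {f | f (Fin.last m) = 0}
    (finite_antitoneBelow b)).symm

end antitoneBelow

theorem init_staircase (m n : ℕ) : Fin.init (staircase (m + 1) n) = staircase m n := rfl

theorem staircase_succ_sub_one (m n : ℕ) : staircase m (n + 1) - 1 = staircase m n := by
  ext i
  simp only [staircase, Pi.sub_apply, Pi.one_apply]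
  omega

theorem ncard_antitoneBelow_staircase_succ_succ {m n : ℕ} (h : m ≤ n) :
    (antitoneBelow (staircase (m + 1) (n + 1))).ncard =
      (antitoneBelow (staircase m (n + 1))).ncard +
        (antitoneBelow (staircase (m + 1) n)).ncard := by
  have hlast : 0 < staircase (m + 1) (n + 1) (Fin.last m) := Nat.sub_pos_of_lt (by simpa using h)
  rw [ncard_antitoneBelow_succ hlast, init_staircase, staircase_succ_sub_one]

theorem ncard_antitoneBelow_staircase_succ_self (n : ℕ) :
    (antitoneBelow (staircase (n + 1) n)).ncard = 0 := by
  have hlast : staircase (n + 1) n (Fin.last n) = 0 := Nat.sub_self n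
  rw [antitoneBelow_eq_empty hlast, Set.ncard_empty]

theorem ncard_antitoneBelow_staircase_add_choose {m n : ℕ} (h : m ≤ n + 1) :
    (antitoneBelow (staircase m n)).ncard + (n + m).choose (n + 1) = (n + m).choose n := by
  induction n generalizing m with
  | zero =>
    obtain rfl | rfl : m = 0 ∨ m = 1 := by omega
    · simp [ncard_antitoneBelow_of_isEmpty]
    · simp [ncard_antitoneBelow_staircase_succ_self]
  | succ n ihn =>
    induction m with
    | zero => simp [ncard_antitoneBelow_of_isEmpty]
    | succ m ihm =>
      obtain rfl | hmn : m = n + 1 ∨ m ≤ n := by omega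
      · rw [ncard_antitoneBelow_staircase_succ_self, zero_add]
        exact Nat.choose_symm_of_eq_add (by omega)
      · have drop_row := ihm (by omega)
        have drop_column := ihn (m := m + 1) (by omega)
        rw [ncard_antitoneBelow_staircase_succ_succ hmn,
          show n + 1 + (m + 1) = n + (m + 1) + 1 by omega, Nat.choose_succ_succ' _ n,
          Nat.choose_succ_succ' _ (n + 1)]
        rw [show n + 1 + m = n + (m + 1) by omega] at drop_row
        omega

theorem catalan_add_choose_succ (n : ℕ) :
    catalan n + (2 * n).choose (n + 1) = (2 * n).choose n := by
  have hcatalan : (n + 1) * catalan n = (2 * n).choose n := succ_mul_catalan_eq_centralBinom n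
  have hchoose : (2 * n).choose (n + 1) * (n + 1) = (2 * n).choose n * n := by
    rw [Nat.choose_succ_right_eq, show 2 * n - n = n by omega]
  apply Nat.eq_of_mul_eq_mul_left (Nat.add_one_pos n)
  linear_combination hcatalan + hchoose

theorem ncard_antitoneBelow_staircase_self (n : ℕ) :
    (antitoneBelow (staircase n n)).ncard = catalan n := by
  have hballot := ncard_antitoneBelow_staircase_add_choose n.le_succ
  rw [← two_mul, ← catalan_add_choose_succ] at hballot
  exact Nat.add_right_cancel hballot

/-- Partitions fitting in the staircase shape `(n-1, n-2, …, 1, 0)` — i.e.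
antitone functions `f : Fin n → ℕ` with `f i ≤ n - 1 - i` — are counted by the
`n`-th Catalan number.  Equivalently, the lattice paths of length `2n` from
`(0,n)` to `(n,0)` staying inside the triangle with vertices `(0,0)`, `(n,0)`,
`(0,n)` are counted by the Catalan number. -/
theorem card_staircase_partitions (n : ℕ) :
    Nat.card {f : Fin n → ℕ // Antitone f ∧ ∀ i : Fin n, f i ≤ n - 1 - (i : ℕ)} =
      catalan n := by
  have hset : {f : Fin n → ℕ | Antitone f ∧ ∀ i : Fin n, f i ≤ n - 1 - (i : ℕ)} =
      antitoneBelow (staircase n n) := by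
    ext f
    refine and_congr_right fun _ => forall_congr' fun i => ?_
    simp only [staircase]
    omega
  rw [← ncard_antitoneBelow_staircase_self, ← hset, ← Nat.card_coe_set_eq]
  rfl
end
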